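/- arXiv:2405.05102 — 3 statements merged into one kernel-verified Lean document; each statement's English description precedes it below -/
import Mathlib

section
/- For each integer i ≥ 2, the occupation probabilities of the harmonic descent chain satisfy lim_{n→∞} a(n,i) = 6·h_{i−1} / (π²·(i−1)). -/
open Real Filter Topology MeasureTheory

/-- The harmonic number `h n = ∑_{i=1}^n 1/i`, with `h 0 = 0`. -/
noncomputable def harmonic' (n : ℕ) : ℝ := ∑ i ∈ Finset.Icc 1 n, (1 : ℝ) / i

/-- One-step transition probabilities of the harmonic descent chain,
`p j i = 1/((j-i)·h_{j-1})` for `1 ≤ i < j`. -/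
noncomputable def hdP (j i : ℕ) : ℝ := 1 / (((j : ℝ) - (i : ℝ)) * harmonic' (j - 1))

/-- `b 1 = 1` and `b i = 6 h_{i-1} / (π² (i-1))` for `i ≥ 2`. -/
noncomputable def hdB (i : ℕ) : ℝ :=
  if i = 1 then 1 else 6 * harmonic' (i - 1) / (Real.pi ^ 2 * ((i : ℝ) - 1))

/-!
Shift the states by one and let `u n` be the probability that the chain started at `n + 1` visits
`s + 1`, where `s = i - 1`. The first-step equation reads `h_n u_n = ∑_{s ≤ j < n} u_j / (n - j)`.
Since the weights `1 / d` are log-convex, a Kaluza-type argument shows that `u` decreases, so it has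
a limit `L`. On the other hand, the weights `1 / j` are invariant for the shifted chain, which makes
`∑_{s ≤ j ≤ n} (h_n - h_{n-j}) / j * u_j` independent of `n`, hence equal to its value `h_s / s` at
`n = s`. The coefficients `(h_n - h_{n-j}) / j` tend to `0` for fixed `j`, and their sum over
`1 ≤ j ≤ n` is `∑_{m ≤ n} 1 / m ^ 2`, by the same computation with `u` replaced by `1`. The
Silverman–Toeplitz theorem therefore gives `π ^ 2 / 6 * L = h_s / s`.
-/

section Toeplitz

variable {ι κ 𝕜 E : Type*} [NormedField 𝕜] [SeminormedAddCommGroup E] [NormedSpace 𝕜 E]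
  {l : Filter ι} {S : ι → Finset κ} {w : ι → κ → 𝕜} {x : κ → E} {C : ℝ}

lemma tendsto_sum_smul_zero_of_sum_norm_le (hC : ∀ᶠ n in l, ∑ j ∈ S n, ‖w n j‖ ≤ C)
    (hw : ∀ j, Tendsto (fun n => w n j) l (𝓝 0)) (hx : Tendsto x cofinite (𝓝 0)) :
    Tendsto (fun n => ∑ j ∈ S n, w n j • x j) l (𝓝 0) := by
  classical
  rw [NormedAddGroup.tendsto_nhds_zero]
  intro ε hε
  obtain ⟨δ, hδ, hδC⟩ : ∃ δ > 0, δ * C < ε / 2 := by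
    refine ⟨ε / 2 / (|C| + 1), by positivity, ?_⟩
    rw [div_mul_eq_mul_div, div_lt_iff₀ (by positivity)]
    gcongr
    linarith [le_abs_self C]
  have hfin : {j | ¬‖x j‖ < δ}.Finite := (NormedAddGroup.tendsto_nhds_zero.1 hx δ hδ :)
  set F := hfin.toFinset
  have hhead : Tendsto (fun n => ∑ j ∈ F, ‖w n j • x j‖) l (𝓝 0) := by
    simpa using tendsto_finsetSum F fun j _ => ((hw j).smul_const (x j)).norm
  filter_upwards [hC, hhead.eventually_lt_const (half_pos hε)] with n hCn hFn
  have htail : ∑ j ∈ S n \ F, ‖w n j • x j‖ ≤ δ * C :=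
    calc ∑ j ∈ S n \ F, ‖w n j • x j‖
        ≤ ∑ j ∈ S n \ F, δ * ‖w n j‖ := by
          refine Finset.sum_le_sum fun j hj => ?_
          have hxj : ‖x j‖ < δ := by simpa [F] using (Finset.mem_sdiff.1 hj).2
          rw [norm_smul, mul_comm]
          gcongr
      _ ≤ ∑ j ∈ S n, δ * ‖w n j‖ :=
          Finset.sum_le_sum_of_subset_of_nonneg Finset.sdiff_subset fun _ _ _ => by positivity
      _ ≤ δ * C := by rw [← Finset.mul_sum]; gcongr
  calc ‖∑ j ∈ S n, w n j • x j‖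
      ≤ ∑ j ∈ S n, ‖w n j • x j‖ := norm_sum_le _ _
    _ = ∑ j ∈ S n ∩ F, ‖w n j • x j‖ + ∑ j ∈ S n \ F, ‖w n j • x j‖ :=
        (Finset.sum_inter_add_sum_sdiff _ _ _).symm
    _ ≤ ∑ j ∈ F, ‖w n j • x j‖ + δ * C := by
        gcongr
        exact Finset.inter_subset_right
    _ < ε := by linarith

/-- The Silverman–Toeplitz theorem. -/
lemma tendsto_sum_smul_of_sum_norm_le {W : 𝕜} {L : E}
    (hC : ∀ᶠ n in l, ∑ j ∈ S n, ‖w n j‖ ≤ C) (hw : ∀ j, Tendsto (fun n => w n j) l (𝓝 0))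
    (hW : Tendsto (fun n => ∑ j ∈ S n, w n j) l (𝓝 W)) (hx : Tendsto x cofinite (𝓝 L)) :
    Tendsto (fun n => ∑ j ∈ S n, w n j • x j) l (𝓝 (W • L)) := by
  have hzero := tendsto_sum_smul_zero_of_sum_norm_le hC hw (tendsto_sub_nhds_zero_iff.2 hx)
  simpa [smul_sub, Finset.sum_smul] using hzero.add (hW.smul_const L)

end Toeplitz

lemma sum_Ico_sub_succ_mul {R : Type*} [NonUnitalNonAssocRing R] (u g : ℕ → R) {m n : ℕ}
    (hmn : m ≤ n) :
    ∑ k ∈ Finset.Ico m n, (u k - u (k + 1)) * g (k + 1)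
      = u m * g m + ∑ k ∈ Finset.Ico m n, u k * (g (k + 1) - g k) - u n * g n := by
  have htele := Finset.sum_Ico_sub (fun k => u k * g k) hmn
  rw [add_sub_right_comm, ← neg_sub (u n * g n), ← htele, ← Finset.sum_neg_distrib,
    ← Finset.sum_add_distrib]
  refine Finset.sum_congr rfl fun k _ => ?_
  rw [sub_mul, mul_sub]
  abel

lemma sum_range_mul_sum_range_le {R : Type*} [CommSemiring R] [PartialOrder R]
    [IsOrderedAddMonoid R] {f g : ℕ → R} {s k : ℕ} (hsk : s ≤ k)
    (h : ∀ i j, i ≤ j → j < k → g j * f i ≤ g i * f j) :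
    (∑ i ∈ Finset.range k, g i) * ∑ i ∈ Finset.range s, f i
      ≤ (∑ i ∈ Finset.range s, g i) * ∑ i ∈ Finset.range k, f i := by
  rw [← Finset.sum_range_add_sum_Ico g hsk, ← Finset.sum_range_add_sum_Ico f hsk, add_mul,
    mul_add, Finset.sum_mul_sum (Finset.Ico s k), Finset.sum_mul_sum _ (Finset.Ico s k),
    Finset.sum_comm]
  gcongr with i hi j hj
  rw [Finset.mem_range] at hi
  rw [Finset.mem_Ico] at hj
  exact h i j (by omega) hj.2

/-- The sum `f n + f (n - 1) + ⋯ + f (n - k + 1)` of the last `k` terms of `f 1 + ⋯ + f n`; it is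
only meaningful for `k ≤ n`. -/
def tailSum {M : Type*} [AddCommMonoid M] (f : ℕ → M) (n k : ℕ) : M :=
  ∑ i ∈ Finset.range k, f (n - i)

section TailSum

variable {M : Type*} [AddCommMonoid M]

lemma tailSum_succ_right (f : ℕ → M) (n k : ℕ) :
    tailSum f n (k + 1) = tailSum f n k + f (n - k) :=
  Finset.sum_range_succ _ _

lemma tailSum_succ_succ (f : ℕ → M) (n k : ℕ) :
    tailSum f (n + 1) (k + 1) = tailSum f n k + f (n + 1) := by
  simp [tailSum, Finset.sum_range_succ']

lemma tailSum_self (f : ℕ → M) (n : ℕ) : tailSum f n n = ∑ m ∈ Finset.Icc 1 n, f m := by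
  induction n with
  | zero => simp [tailSum]
  | succ n ih => rw [tailSum_succ_succ, ih, Finset.sum_Icc_succ_top (by omega)]

lemma tailSum_self_eq_sum_Ico (f : ℕ → M) (n : ℕ) :
    tailSum f n n = ∑ j ∈ Finset.Ico 1 (n + 1), f (n + 1 - j) := by
  rw [Finset.sum_Ico_eq_sum_range]
  exact Finset.sum_congr rfl fun i _ => by congr 1; omega

variable {f : ℕ → ℝ}

lemma tailSum_pos (hpos : ∀ m, 1 ≤ m → 0 < f m) {n k : ℕ} (hk : 1 ≤ k) (hkn : k ≤ n) :
    0 < tailSum f n k := by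
  refine Finset.sum_pos (fun i hi => hpos _ ?_) (Finset.nonempty_range_iff.2 (by omega))
  rw [Finset.mem_range] at hi
  omega

lemma tailSum_succ_mul_tailSum_le (hpos : ∀ m, 1 ≤ m → 0 < f m)
    (hratio : MonotoneOn (fun m => f (m + 1) / f m) (Set.Ici 1)) {n s k : ℕ} (hsk : s ≤ k)
    (hkn : k ≤ n) :
    tailSum f (n + 1) k * tailSum f n s ≤ tailSum f (n + 1) s * tailSum f n k := by
  refine sum_range_mul_sum_range_le hsk fun i j hij hjk => ?_
  have hi : 1 ≤ n - i := by omega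
  have hj : 1 ≤ n - j := by omega
  have h := hratio hj hi (by omega : n - j ≤ n - i)
  beta_reduce at h
  rw [div_le_div_iff₀ (hpos _ hj) (hpos _ hi)] at h
  rwa [Nat.sub_add_comm (by omega : j ≤ n), Nat.sub_add_comm (by omega : i ≤ n)]

end TailSum

/-- `u n` solves the first-step equation for the probability that a descending chain started at
`n ≥ s` visits `s`, where the chain jumps from `n` to `j < n` with probability
`f (n - j) / (f 1 + ⋯ + f n)`. The values of `u` below `s` are left free. -/
structure IsDescentRenewal (f : ℕ → ℝ) (s : ℕ) (u : ℕ → ℝ) : Prop where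
  apply_self : u s = 1
  tailSum_mul : ∀ n, s < n → tailSum f n n * u n = ∑ j ∈ Finset.Ico s n, u j * f (n - j)

namespace IsDescentRenewal

variable {f u : ℕ → ℝ} {s : ℕ}

lemma nonneg (hu : IsDescentRenewal f s u) (hpos : ∀ m, 1 ≤ m → 0 < f m) {n : ℕ} (hn : s ≤ n) :
    0 ≤ u n := by
  induction n using Nat.strong_induction_on with
  | _ n ih =>
    rcases hn.eq_or_lt with rfl | hlt
    · exact hu.apply_self ▸ zero_le_one
    · refine nonneg_of_mul_nonneg_right (a := tailSum f n n) ?_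
        (tailSum_pos hpos (by omega) le_rfl)
      rw [hu.tailSum_mul n hlt]
      refine Finset.sum_nonneg fun j hj => ?_
      rw [Finset.mem_Ico] at hj
      exact mul_nonneg (ih j hj.2 hj.1) (hpos _ (by omega)).le

lemma sum_sub_succ_mul_tailSum (hu : IsDescentRenewal f s u) {n : ℕ} (hn : s < n) :
    ∑ k ∈ Finset.Ico s n, (u k - u (k + 1)) * tailSum f n (k + 1) = tailSum f n s := by
  rw [sum_Ico_sub_succ_mul u (tailSum f n) hn.le, hu.apply_self, mul_comm (u n),
    hu.tailSum_mul n hn]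
  simp [tailSum_succ_right]

/-- Kaluza's argument: comparing the summed-by-parts renewal equations at `n` and `n + 1` expresses
the last decrement through the earlier ones, with signs given by the log-convexity of `f`. -/
lemma succ_le (hu : IsDescentRenewal f s u) (hs : 1 ≤ s) (hpos : ∀ m, 1 ≤ m → 0 < f m)
    (hratio : MonotoneOn (fun m => f (m + 1) / f m) (Set.Ici 1)) {n : ℕ} (hn : s ≤ n) :
    u (n + 1) ≤ u n := by
  induction n using Nat.strong_induction_on with
  | _ n ih =>
    have hlast := hu.sum_sub_succ_mul_tailSum (n := n + 1) (by omega)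
    rw [Finset.sum_Ico_succ_top hn] at hlast
    suffices hearlier : ∑ k ∈ Finset.Ico s n, (u k - u (k + 1)) * tailSum f (n + 1) (k + 1)
        ≤ tailSum f (n + 1) s by
      have hprod : 0 ≤ (u n - u (n + 1)) * tailSum f (n + 1) (n + 1) := by linarith
      exact sub_nonneg.1 (nonneg_of_mul_nonneg_left hprod (tailSum_pos hpos (by omega) le_rfl))
    rcases hn.eq_or_lt with rfl | hlt
    · simpa using (tailSum_pos hpos hs (by omega)).le
    · refine le_of_mul_le_mul_right ?_ (tailSum_pos hpos hs hn)
      calc (∑ k ∈ Finset.Ico s n, (u k - u (k + 1)) * tailSum f (n + 1) (k + 1)) * tailSum f n s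
          = ∑ k ∈ Finset.Ico s n,
              (u k - u (k + 1)) * (tailSum f (n + 1) (k + 1) * tailSum f n s) := by
            simp only [Finset.sum_mul, mul_assoc]
        _ ≤ ∑ k ∈ Finset.Ico s n,
              (u k - u (k + 1)) * (tailSum f (n + 1) s * tailSum f n (k + 1)) := by
            refine Finset.sum_le_sum fun k hk => ?_
            rw [Finset.mem_Ico] at hk
            exact mul_le_mul_of_nonneg_left
              (tailSum_succ_mul_tailSum_le hpos hratio (by omega) (by omega))
              (sub_nonneg.2 (ih k hk.2 hk.1))
        _ = tailSum f (n + 1) s * tailSum f n s := by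
            simp only [← hu.sum_sub_succ_mul_tailSum hlt, Finset.mul_sum, mul_left_comm]

lemma exists_tendsto (hu : IsDescentRenewal f s u) (hs : 1 ≤ s) (hpos : ∀ m, 1 ≤ m → 0 < f m)
    (hratio : MonotoneOn (fun m => f (m + 1) / f m) (Set.Ici 1)) :
    ∃ L, Tendsto u atTop (𝓝 L) := by
  have hanti : Antitone fun n => u (n + s) := antitone_nat_of_succ_le fun n => by
    simpa only [Nat.add_right_comm] using hu.succ_le hs hpos hratio (Nat.le_add_left s n)
  have hbdd : BddBelow (Set.range fun n => u (n + s)) :=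
    ⟨0, Set.forall_mem_range.2 fun n => hu.nonneg hpos (Nat.le_add_left s n)⟩
  exact ⟨_, (tendsto_add_atTop_iff_nat s).1 (tendsto_atTop_ciInf hanti hbdd)⟩

end IsDescentRenewal

/-- The weight `1 / d` which the harmonic descent chain gives to a jump of size `d ≥ 1`. -/
noncomputable def harmonicWeight (d : ℕ) : ℝ := 1 / d

lemma harmonicWeight_pos {d : ℕ} (hd : 1 ≤ d) : 0 < harmonicWeight d := by
  unfold harmonicWeight
  positivity

lemma monotoneOn_harmonicWeight_succ_div :
    MonotoneOn (fun d => harmonicWeight (d + 1) / harmonicWeight d) (Set.Ici 1) := by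
  intro d hd e he hde
  rw [Set.mem_Ici] at hd he
  have hde' : (d : ℝ) ≤ e := by exact_mod_cast hde
  simp only [harmonicWeight, div_div_div_eq, one_mul, mul_one]
  push_cast
  rw [div_le_div_iff₀ (by positivity) (by positivity)]
  linarith

lemma tailSum_harmonicWeight_self (n : ℕ) : tailSum harmonicWeight n n = harmonic' n :=
  tailSum_self _ _

lemma tendsto_tailSum_harmonicWeight (k : ℕ) :
    Tendsto (fun n => tailSum harmonicWeight n k) atTop (𝓝 0) := by
  have hweight : Tendsto harmonicWeight atTop (𝓝 0) := tendsto_one_div_atTop_nhds_zero_nat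
  simpa [tailSum] using
    tendsto_finsetSum (Finset.range k) fun i _ => hweight.comp (tendsto_sub_atTop_nat i)

lemma tailSum_harmonicWeight_succ_div {n j : ℕ} (hj : 1 ≤ j) (hjn : j ≤ n) :
    tailSum harmonicWeight (n + 1) j / j
      = tailSum harmonicWeight n j / j - harmonicWeight (n + 1 - j) / ((n : ℝ) + 1) := by
  have hshift : tailSum harmonicWeight (n + 1) j + harmonicWeight (n + 1 - j)
      = tailSum harmonicWeight n j + harmonicWeight (n + 1) := by
    rw [← tailSum_succ_right, tailSum_succ_succ]
  have hdiff : (n : ℝ) + 1 - j ≠ 0 := by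
    have : (j : ℝ) ≤ n := by exact_mod_cast hjn
    linarith
  rw [eq_sub_of_add_eq hshift, harmonicWeight, harmonicWeight, Nat.cast_sub (by omega)]
  push_cast
  field_simp
  ring

lemma sum_tailSum_harmonicWeight_succ_div_mul (x : ℕ → ℝ) {s n : ℕ} (hs : 1 ≤ s) (hn : s ≤ n + 1) :
    ∑ j ∈ Finset.Ico s (n + 2), tailSum harmonicWeight (n + 1) j / j * x j
      = ∑ j ∈ Finset.Ico s (n + 1), tailSum harmonicWeight n j / j * x j
        + (tailSum harmonicWeight (n + 1) (n + 1) * x (n + 1)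
          - ∑ j ∈ Finset.Ico s (n + 1), x j * harmonicWeight (n + 1 - j)) / ((n : ℝ) + 1) := by
  have hterm : ∀ j ∈ Finset.Ico s (n + 1), tailSum harmonicWeight (n + 1) j / j * x j
      = tailSum harmonicWeight n j / j * x j
        - x j * harmonicWeight (n + 1 - j) / ((n : ℝ) + 1) := fun j hj => by
    rw [Finset.mem_Ico] at hj
    rw [tailSum_harmonicWeight_succ_div (by omega) (by omega)]
    ring
  rw [Finset.sum_Ico_succ_top hn, Finset.sum_congr rfl hterm, Finset.sum_sub_distrib,
    ← Finset.sum_div]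
  push_cast
  ring

lemma sum_tailSum_harmonicWeight_div_eq_sum_one_div_sq (n : ℕ) :
    ∑ j ∈ Finset.Ico 1 (n + 1), tailSum harmonicWeight n j / j
      = ∑ m ∈ Finset.Ico 1 (n + 1), 1 / (m : ℝ) ^ 2 := by
  induction n with
  | zero => simp
  | succ n ih =>
    have hstep := sum_tailSum_harmonicWeight_succ_div_mul 1 le_rfl (Nat.le_add_left 1 n)
    simp only [Pi.one_apply, mul_one, one_mul] at hstep
    rw [hstep, ih, ← tailSum_self_eq_sum_Ico, tailSum_succ_succ, add_sub_cancel_left,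
      Finset.sum_Ico_succ_top (b := n + 1) (by omega), harmonicWeight, div_div,
      Nat.cast_add_one, ← sq]

lemma tendsto_sum_tailSum_harmonicWeight_div {s : ℕ} (hs : 1 ≤ s) :
    Tendsto (fun n => ∑ j ∈ Finset.Ico s (n + 1), tailSum harmonicWeight n j / j) atTop
      (𝓝 (π ^ 2 / 6)) := by
  induction s, hs using Nat.le_induction with
  | base =>
    simp only [sum_tailSum_harmonicWeight_div_eq_sum_one_div_sq]
    refine ((tendsto_add_atTop_iff_nat 1).2 hasSum_zeta_two.tendsto_sum_nat).congr fun n => ?_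
    simp [Finset.sum_range_eq_add_Ico _ n.succ_pos]
  | succ s _ ih =>
    have hdrop := ih.sub ((tendsto_tailSum_harmonicWeight s).div_const (s : ℝ))
    rw [zero_div, sub_zero] at hdrop
    refine hdrop.congr' ?_
    filter_upwards [eventually_ge_atTop s] with n hn
    exact Finset.sum_Ico_sub_bot _ (by omega)

namespace IsDescentRenewal

variable {s : ℕ} {u : ℕ → ℝ}

lemma sum_tailSum_harmonicWeight_div_mul (hu : IsDescentRenewal harmonicWeight s u) (hs : 1 ≤ s)
    {n : ℕ} (hn : s ≤ n) :
    ∑ j ∈ Finset.Ico s (n + 1), tailSum harmonicWeight n j / j * u j = harmonic' s / s := by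
  induction n, hn using Nat.le_induction with
  | base => simp [hu.apply_self, tailSum_harmonicWeight_self]
  | succ n hn ih =>
    rw [sum_tailSum_harmonicWeight_succ_div_mul u hs (by omega), ih,
      hu.tailSum_mul (n + 1) (by omega), sub_self, zero_div, add_zero]

lemma tendsto (hu : IsDescentRenewal harmonicWeight s u) (hs : 1 ≤ s) :
    Tendsto u atTop (𝓝 (6 * harmonic' s / (π ^ 2 * s))) := by
  obtain ⟨L, hL⟩ :=
    hu.exists_tendsto hs (fun _ => harmonicWeight_pos) monotoneOn_harmonicWeight_succ_div
  have hW := tendsto_sum_tailSum_harmonicWeight_div hs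
  have hbound : ∀ᶠ n in atTop, ∑ j ∈ Finset.Ico s (n + 1), ‖tailSum harmonicWeight n j / j‖
      ≤ π ^ 2 / 6 + 1 := by
    filter_upwards [hW.eventually_le_const (lt_add_one _)] with n hn
    refine (Finset.sum_congr rfl fun j hj => ?_).trans_le hn
    rw [Finset.mem_Ico] at hj
    have htail := tailSum_pos (fun _ => harmonicWeight_pos) (hs.trans hj.1) (Nat.le_of_lt_succ hj.2)
    exact Real.norm_of_nonneg (by positivity)
  have hlim := tendsto_sum_smul_of_sum_norm_le hbound
    (fun j => by simpa using (tendsto_tailSum_harmonicWeight j).div_const (j : ℝ)) hW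
    (Nat.cofinite_eq_atTop ▸ hL)
  have hconst : π ^ 2 / 6 * L = harmonic' s / s :=
    tendsto_nhds_unique hlim <| tendsto_const_nhds.congr' <| by
      filter_upwards [eventually_ge_atTop s] with n hn
      exact (hu.sum_tailSum_harmonicWeight_div_mul hs hn).symm
  convert hL using 2
  rw [mul_comm (π ^ 2), ← div_div, mul_div_assoc, ← hconst]
  field_simp

end IsDescentRenewal

/-- Decomposing a descending path at its last step before `i` or at its first step gives the same
occupation probabilities. -/
lemma eq_sum_Ico_mul_of_eq_sum_Ioc_mul {α R : Type*} [PartialOrder α] [LocallyFiniteOrder α]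
    [Semiring R] {a p : α → α → R} (hdiag : ∀ n, a n n = 1)
    (hrec : ∀ n i, i < n → a n i = ∑ j ∈ Finset.Ioc i n, a n j * p j i) {n i : α} (hin : i < n) :
    a n i = ∑ k ∈ Finset.Ico i n, p n k * a k i := by
  induction hd : (Finset.Ico i n).card using Nat.strong_induction_on generalizing i with
  | _ d ih =>
    rw [hrec n i hin, ← Finset.add_sum_Ioo_eq_sum_Ioc hin, ← Finset.add_sum_Ioo_eq_sum_Ico hin,
      hdiag, hdiag, one_mul, mul_one]
    congr 1
    calc ∑ j ∈ Finset.Ioo i n, a n j * p j i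
        = ∑ j ∈ Finset.Ioo i n, ∑ k ∈ Finset.Ico j n, p n k * (a k j * p j i) := by
          refine Finset.sum_congr rfl fun j hj => ?_
          rw [Finset.mem_Ioo] at hj
          have hcard : (Finset.Ico j n).card < d :=
            hd ▸ Finset.card_lt_card ((Finset.ssubset_iff_of_subset
              (Finset.Ico_subset_Ico_left hj.1.le)).2 ⟨i, by simp [hin], by simp [hj.1.not_ge]⟩)
          simp only [ih _ hcard hj.2 rfl, Finset.sum_mul, mul_assoc]
      _ = ∑ k ∈ Finset.Ioo i n, ∑ j ∈ Finset.Ioc i k, p n k * (a k j * p j i) := by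
          refine Finset.sum_comm' fun j k => ?_
          simp only [Finset.mem_Ioo, Finset.mem_Ico, Finset.mem_Ioc]
          exact ⟨fun ⟨⟨hij, _⟩, hjk, hkn⟩ => ⟨⟨hij, hjk⟩, hij.trans_le hjk, hkn⟩,
            fun ⟨⟨hij, hjk⟩, _, hkn⟩ => ⟨⟨hij, hjk.trans_lt hkn⟩, hjk, hkn⟩⟩
      _ = ∑ k ∈ Finset.Ioo i n, p n k * a k i := by
          refine Finset.sum_congr rfl fun k hk => ?_
          rw [hrec k i (Finset.mem_Ioo.1 hk).1, Finset.mul_sum]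

lemma harmonic'_mul_hdP_succ_succ {n j : ℕ} (hjn : j < n) :
    harmonic' n * hdP (n + 1) (j + 1) = harmonicWeight (n - j) := by
  have hpos : 0 < harmonic' n := by
    rw [← tailSum_harmonicWeight_self]
    exact tailSum_pos (fun _ => harmonicWeight_pos) (by omega) le_rfl
  rw [hdP, harmonicWeight, Nat.cast_sub hjn.le, Nat.add_sub_cancel]
  push_cast
  rw [add_sub_add_right_eq_sub]
  field_simp

lemma isDescentRenewal_of_hdP {a : ℕ → ℕ → ℝ} (ha_diag : ∀ n, 1 ≤ n → a n n = 1)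
    (ha_rec : ∀ n i, 1 ≤ i → i < n → a n i = ∑ j ∈ Finset.Ioc i n, a n j * hdP j i) (s : ℕ) :
    IsDescentRenewal harmonicWeight s fun n => a (n + 1) (s + 1) where
  apply_self := ha_diag _ (by omega)
  tailSum_mul n hn := by
    have hrec : ∀ n i, i < n → a (n + 1) (i + 1)
        = ∑ j ∈ Finset.Ioc i n, a (n + 1) (j + 1) * hdP (j + 1) (i + 1) := fun n i hin => by
      rw [ha_rec _ _ (by omega) (by omega), ← Finset.map_add_right_Ioc, Finset.sum_map]
      rfl
    rw [eq_sum_Ico_mul_of_eq_sum_Ioc_mul (a := fun n i => a (n + 1) (i + 1))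
      (fun n => ha_diag _ (by omega)) hrec hn, Finset.mul_sum, tailSum_harmonicWeight_self]
    refine Finset.sum_congr rfl fun j hj => ?_
    rw [← mul_assoc, harmonic'_mul_hdP_succ_succ (Finset.mem_Ico.1 hj).2, mul_comm]

theorem hd_occupation_limit
    (a : ℕ → ℕ → ℝ)
    (ha_diag : ∀ n : ℕ, 1 ≤ n → a n n = 1)
    (ha_rec : ∀ n i : ℕ, 1 ≤ i → i < n →
      a n i = ∑ j ∈ Finset.Ioc i n, a n j * hdP j i)
    (i : ℕ) (hi : 2 ≤ i) :
    Filter.Tendsto (fun n => a n i) Filter.atTop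
      (𝓝 (6 * harmonic' (i - 1) / (Real.pi ^ 2 * ((i : ℝ) - 1)))) := by
  obtain ⟨s, rfl⟩ : ∃ s, i = s + 1 := ⟨i - 1, by omega⟩
  rw [← tendsto_add_atTop_iff_nat 1]
  simpa using (isDescentRenewal_of_hdP ha_diag ha_rec s).tendsto (by omega)
end

section
/- For each integer i ≥ 1, the limit a(i) := lim_{n→∞} a(n,i) exists; moreover a(1) = 1, and for every i ≥ 1 the series Σ_{j=i+1}^∞ a(j)·p(j,i) converges and equals a(i). -/
open Real Filter Topology MeasureTheory

/-!
The chain is one of the descent chains whose jump of size `k` has a fixed weight `f k`, normalised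
over the sizes available; here `f k = 1/k`. If `f` is log-convex, that is, if `f (k + 1) / f k` is
nondecreasing, then `a n i` is nonincreasing in `n`, by an argument going back to Kaluza. Let
`W n l` be the total weight of the jumps from `n` to a state below `l`. Summing the first-jump
decomposition of `a n i` by parts shows that the differences `d l = a l i - a (l + 1) i` solve the
triangular system `∑_{i ≤ l < n} d l * W n (l + 1) = W n i` for `n > i`. Log-convexity makes
`W (n + 1) l / W n l` antitone in `l`, so if `d l ≥ 0` for all `l < n`, then the sum of
`d l * W (n + 1) (l + 1)` over these `l` is at most `W (n + 1) i`, which leaves `d n ≥ 0`.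

If moreover `f` is nonincreasing, then from a state `j ≥ m` each of the `m - i` states in `[i, m)`
is at least as likely a target as `i`. The chain crosses the level `m` exactly once, so jumps from
`[m, ∞)` contribute at most `1 / (m - i)` to `a n i`, uniformly in `n`, and the limit may be taken
inside the forward recursion.
-/

/-- The occupation probabilities `a n i`, for `1 ≤ i ≤ n`, of a strictly descending chain on the
positive integers with transition probabilities `p`, characterised by the forward recursion. Only
the values `p j i` with `1 ≤ i < j` are used. -/
structure IsOccupation (p a : ℕ → ℕ → ℝ) : Prop where
  self_eq_one : ∀ n, 1 ≤ n → a n n = 1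
  eq_sum_last_jump : ∀ n i, 1 ≤ i → i < n → a n i = ∑ j ∈ Finset.Ioc i n, a n j * p j i

/-- `p` is a transition kernel on the positive integers under which every state `j ≥ 2` jumps
strictly downwards. The row of the absorbing state `1` and the values outside `1 ≤ i < j` are left
unconstrained. -/
structure IsDescentKernel (p : ℕ → ℕ → ℝ) : Prop where
  nonneg : ∀ j i, 1 ≤ i → i < j → 0 ≤ p j i
  sum_eq_one : ∀ j, 2 ≤ j → ∑ i ∈ Finset.Ico 1 j, p j i = 1

/-! ### Occupation probabilities of a descending chain -/

namespace IsOccupation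

variable {p a : ℕ → ℕ → ℝ}

lemma nonneg (ha : IsOccupation p a) (hp : IsDescentKernel p) {n i : ℕ} (hi : 1 ≤ i)
    (hin : i ≤ n) : 0 ≤ a n i := by
  obtain rfl | hlt := hin.eq_or_lt
  · exact ha.self_eq_one i hi ▸ zero_le_one
  rw [ha.eq_sum_last_jump n i hi hlt]
  refine Finset.sum_nonneg fun j hj => ?_
  obtain ⟨hij, hjn⟩ := Finset.mem_Ioc.mp hj
  exact mul_nonneg (ha.nonneg hp (by lia) hjn) (hp.nonneg j i hi hij)
termination_by n - i

lemma eq_sum_first_jump (ha : IsOccupation p a) {n i : ℕ} (hi : 1 ≤ i) (hin : i < n) :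
    a n i = ∑ j ∈ Finset.Ico i n, p n j * a j i := by
  have htwo_jumps : ∑ j ∈ Finset.Ioo i n, a n j * p j i
      = ∑ l ∈ Finset.Ioo i n, p n l * a l i :=
    calc ∑ j ∈ Finset.Ioo i n, a n j * p j i
        = ∑ j ∈ Finset.Ioo i n, ∑ l ∈ Finset.Ico j n, p n l * a l j * p j i := by
          refine Finset.sum_congr rfl fun j hj => ?_
          obtain ⟨hij, hjn⟩ := Finset.mem_Ioo.mp hj
          rw [ha.eq_sum_first_jump (by lia) hjn, Finset.sum_mul]
      _ = ∑ l ∈ Finset.Ioo i n, ∑ j ∈ Finset.Ioc i l, p n l * a l j * p j i := by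
          refine Finset.sum_comm' fun j l => ?_
          simp only [Finset.mem_Ioo, Finset.mem_Ico, Finset.mem_Ioc]
          lia
      _ = ∑ l ∈ Finset.Ioo i n, p n l * a l i := by
          refine Finset.sum_congr rfl fun l hl => ?_
          rw [ha.eq_sum_last_jump l i hi (Finset.mem_Ioo.mp hl).1, Finset.mul_sum]
          simp only [mul_assoc]
  rw [ha.eq_sum_last_jump n i hi hin, ← Finset.add_sum_Ioo_eq_sum_Ioc hin,
    ← Finset.add_sum_Ioo_eq_sum_Ico hin, htwo_jumps, ha.self_eq_one n (by lia),
    ha.self_eq_one i hi, one_mul, mul_one]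
termination_by n - i

/-- The summand indexed by `j` is the probability that the chain crosses the level `m` by a jump
from `j`. -/
lemma sum_crossing_eq_one (ha : IsOccupation p a) (hp : IsDescentKernel p) {n m : ℕ}
    (hm : 2 ≤ m) (hmn : m ≤ n) :
    ∑ j ∈ Finset.Icc m n, a n j * ∑ i ∈ Finset.Ico 1 m, p j i = 1 := by
  rw [← Finset.add_sum_Ioc_eq_sum_Icc hmn, hp.sum_eq_one m hm, mul_one]
  obtain rfl | hlt := hmn.eq_or_lt
  · simp only [Finset.Ioc_self, Finset.sum_empty, add_zero, ha.self_eq_one m (by lia)]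
  rw [ha.eq_sum_last_jump n m (by lia) hlt, ← Finset.sum_add_distrib,
    ← ha.sum_crossing_eq_one hp (Nat.le_succ_of_le hm) hlt, ← Finset.Icc_add_one_left_eq_Ioc]
  refine Finset.sum_congr rfl fun j _ => ?_
  rw [Finset.sum_Ico_succ_top (by lia : 1 ≤ m), mul_add, add_comm]
termination_by n - m

lemma apply_one (ha : IsOccupation p a) (hp : IsDescentKernel p) {n : ℕ} (hn : 1 ≤ n) :
    a n 1 = 1 := by
  obtain rfl | hlt := hn.eq_or_lt
  · exact ha.self_eq_one 1 le_rfl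
  · rw [ha.eq_sum_last_jump n 1 le_rfl hlt, ← ha.sum_crossing_eq_one hp le_rfl hlt]
    simp [← Finset.Icc_add_one_left_eq_Ioc]

lemma sum_jumps_from_above_le (ha : IsOccupation p a) (hp : IsDescentKernel p)
    (hmono : ∀ j, MonotoneOn (p j) (Set.Ico 1 j)) {n m i : ℕ} (hi : 1 ≤ i) (him : i < m)
    (hmn : m ≤ n) : ∑ j ∈ Finset.Icc m n, a n j * p j i ≤ 1 / ((m : ℝ) - i) := by
  have him' : (0 : ℝ) < m - i := sub_pos.mpr (by exact_mod_cast him)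
  have hcrossing {j : ℕ} (hmj : m ≤ j) :
      p j i * ((m : ℝ) - i) ≤ ∑ l ∈ Finset.Ico 1 m, p j l :=
    calc p j i * ((m : ℝ) - i)
        = ∑ _l ∈ Finset.Ico i m, p j i := by
          rw [Finset.sum_const, Nat.card_Ico, nsmul_eq_mul, Nat.cast_sub him.le, mul_comm]
      _ ≤ ∑ l ∈ Finset.Ico i m, p j l := by
          refine Finset.sum_le_sum fun l hl => ?_
          obtain ⟨hil, hlm⟩ := Finset.mem_Ico.mp hl
          exact hmono j ⟨hi, by lia⟩ ⟨by lia, by lia⟩ hil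
      _ ≤ ∑ l ∈ Finset.Ico 1 m, p j l := by
          refine Finset.sum_le_sum_of_subset_of_nonneg (Finset.Ico_subset_Ico_left hi)
            fun l hl _ => ?_
          obtain ⟨hl1, hlm⟩ := Finset.mem_Ico.mp hl
          exact hp.nonneg j l hl1 (by lia)
  rw [le_div_iff₀ him', Finset.sum_mul, ← ha.sum_crossing_eq_one hp (by lia) hmn]
  refine Finset.sum_le_sum fun j hj => ?_
  obtain ⟨hmj, hjn⟩ := Finset.mem_Icc.mp hj
  rw [mul_assoc]
  exact mul_le_mul_of_nonneg_left (hcrossing hmj) (ha.nonneg hp (by lia) hjn)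

lemma abs_sub_sum_Ioo_le (ha : IsOccupation p a) (hp : IsDescentKernel p)
    (hmono : ∀ j, MonotoneOn (p j) (Set.Ico 1 j)) {n m i : ℕ} (hi : 1 ≤ i) (him : i < m)
    (hmn : m ≤ n) :
    |a n i - ∑ j ∈ Finset.Ioo i m, a n j * p j i| ≤ 1 / ((m : ℝ) - i) := by
  have hsplit : a n i = ∑ j ∈ Finset.Ioo i m, a n j * p j i
      + ∑ j ∈ Finset.Icc m n, a n j * p j i := by
    rw [ha.eq_sum_last_jump n i hi (by lia), ← Finset.Ico_add_one_left_eq_Ioo,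
      ← Finset.Ico_add_one_right_eq_Icc, ← Finset.Ico_add_one_add_one_eq_Ioc,
      Finset.sum_Ico_consecutive _ (show i + 1 ≤ m from him) (show m ≤ n + 1 by lia)]
  rw [hsplit, add_sub_cancel_left, abs_of_nonneg]
  · exact ha.sum_jumps_from_above_le hp hmono hi him hmn
  · refine Finset.sum_nonneg fun j hj => ?_
    obtain ⟨hmj, hjn⟩ := Finset.mem_Icc.mp hj
    exact mul_nonneg (ha.nonneg hp (by lia) hjn) (hp.nonneg j i hi (by lia))

lemma hasSum_of_tendsto (ha : IsOccupation p a) (hp : IsDescentKernel p)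
    (hmono : ∀ j, MonotoneOn (p j) (Set.Ico 1 j)) {A : ℕ → ℝ}
    (hlim : ∀ i, 1 ≤ i → Tendsto (fun n => a n i) atTop (𝓝 (A i))) {i : ℕ} (hi : 1 ≤ i) :
    HasSum (fun j => if i < j then A j * p j i else 0) (A i) := by
  have hA_nonneg {j : ℕ} (hj : 1 ≤ j) : 0 ≤ A j :=
    ge_of_tendsto (hlim j hj) ((eventually_ge_atTop j).mono fun n hn => ha.nonneg hp hj hn)
  have hpartial (m : ℕ) : ∑ j ∈ Finset.range m, (if i < j then A j * p j i else 0)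
      = ∑ j ∈ Finset.Ioo i m, A j * p j i := by
    rw [← Finset.sum_filter]
    congr 1
    grind
  have hbound {m : ℕ} (him : i < m) :
      |A i - ∑ j ∈ Finset.Ioo i m, A j * p j i| ≤ 1 / ((m : ℝ) - i) := by
    have hsum_lim : Tendsto (fun n => ∑ j ∈ Finset.Ioo i m, a n j * p j i) atTop
        (𝓝 (∑ j ∈ Finset.Ioo i m, A j * p j i)) :=
      tendsto_finsetSum _ fun j hj =>
        (hlim j (hi.trans (Finset.mem_Ioo.mp hj).1.le)).mul_const _
    exact le_of_tendsto ((hlim i hi).sub hsum_lim).abs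
      ((eventually_ge_atTop m).mono fun n hmn => ha.abs_sub_sum_Ioo_le hp hmono hi him hmn)
  have hbound_lim : Tendsto (fun m : ℕ => 1 / ((m : ℝ) - i)) atTop (𝓝 0) := by
    simp only [sub_eq_add_neg]
    exact (tendsto_atTop_add_const_right _ _ tendsto_natCast_atTop_atTop).const_div_atTop 1
  rw [hasSum_iff_tendsto_nat_of_nonneg]
  · simp only [hpartial]
    refine tendsto_iff_dist_tendsto_zero.mpr
      (squeeze_zero' (.of_forall fun _ => dist_nonneg) ?_ hbound_lim)
    filter_upwards [eventually_gt_atTop i] with m him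
    rw [dist_comm, Real.dist_eq]
    exact hbound him
  · intro j
    split_ifs with hij
    · exact mul_nonneg (hA_nonneg (by lia)) (hp.nonneg j i hi hij)
    · exact le_rfl

lemma exists_tendsto_of_succ_le (ha : IsOccupation p a) (hp : IsDescentKernel p) {i : ℕ}
    (hi : 1 ≤ i) (hanti : ∀ n, i ≤ n → a (n + 1) i ≤ a n i) :
    ∃ L, Tendsto (fun n => a n i) atTop (𝓝 L) := by
  have hshift : Antitone fun n => a (n + i) i := antitone_nat_of_succ_le fun n => by
    simpa only [Nat.add_right_comm n 1 i] using hanti (n + i) (Nat.le_add_left i n)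
  have hbdd : BddBelow (Set.range fun n => a (n + i) i) :=
    ⟨0, Set.forall_mem_range.mpr fun n => ha.nonneg hp hi (Nat.le_add_left i n)⟩
  exact ⟨_, (tendsto_add_atTop_iff_nat i).mp (tendsto_atTop_ciInf hshift hbdd)⟩

end IsOccupation

/-! ### Log-convex jump weights -/

/-- Under `p`, the jumps from `j` have sizes `1, …, j - 1` with probabilities proportional to the
weights `f 1, …, f (j - 1)`. -/
def HasJumpWeights (p : ℕ → ℕ → ℝ) (f : ℕ → ℝ) : Prop :=
  ∀ j i, 1 ≤ i → i < j → p j i = f (j - i) / ∑ k ∈ Finset.Ico 1 j, f k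

/-- The total weight of the jumps from `n` to a state below `l`, meaningful for `l ≤ n`. -/
def weightBelow (f : ℕ → ℝ) (n l : ℕ) : ℝ := ∑ i ∈ Finset.Ico 1 l, f (n - i)

lemma sum_Ico_sub_mul_succ (u v : ℕ → ℝ) {m n : ℕ} (hmn : m ≤ n) :
    ∑ l ∈ Finset.Ico m n, (u l - u (l + 1)) * v (l + 1)
      = u m * v m - u n * v n + ∑ l ∈ Finset.Ico m n, u l * (v (l + 1) - v l) := by
  rw [← sub_eq_iff_eq_add, ← Finset.sum_sub_distrib, ← neg_sub (u n * v n),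
    ← Finset.sum_Ico_sub (fun l => u l * v l) hmn, ← Finset.sum_neg_distrib]
  exact Finset.sum_congr rfl fun l _ => by ring

lemma nonneg_of_sum_mul_eq {v : ℕ → ℕ → ℝ} {d : ℕ → ℝ} {i : ℕ}
    (hpos : ∀ n, i < n → 0 < v n i) (hdiag : ∀ n, i < n → 0 < v n n)
    (hratio : ∀ n l, i ≤ l → l ≤ n → v (n + 1) l * v n i ≤ v (n + 1) i * v n l)
    (hsum : ∀ n, i < n → ∑ l ∈ Finset.Ico i n, d l * v n (l + 1) = v n i)
    {n : ℕ} (hn : i ≤ n) : 0 ≤ d n := by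
  induction n using Nat.strong_induction_on with
  | _ n ih =>
  have hpartial : ∑ l ∈ Finset.Ico i n, d l * v (n + 1) (l + 1) ≤ v (n + 1) i := by
    obtain rfl | hlt := hn.eq_or_lt
    · simpa only [Finset.Ico_self, Finset.sum_empty] using (hpos (i + 1) i.lt_succ_self).le
    refine le_of_mul_le_mul_right ?_ (hpos n hlt)
    calc (∑ l ∈ Finset.Ico i n, d l * v (n + 1) (l + 1)) * v n i
        ≤ v (n + 1) i * ∑ l ∈ Finset.Ico i n, d l * v n (l + 1) := by
          rw [Finset.sum_mul, Finset.mul_sum]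
          refine Finset.sum_le_sum fun l hl => ?_
          obtain ⟨hil, hln⟩ := Finset.mem_Ico.mp hl
          rw [mul_assoc, mul_left_comm (v (n + 1) i)]
          exact mul_le_mul_of_nonneg_left (hratio n (l + 1) (by lia) hln) (ih l hln hil)
      _ = v (n + 1) i * v n i := by rw [hsum n hlt]
  have hlast : 0 ≤ d n * v (n + 1) (n + 1) := by
    have hsum_succ := hsum (n + 1) (by lia)
    rw [Finset.sum_Ico_succ_top hn] at hsum_succ
    linarith
  exact nonneg_of_mul_nonneg_left hlast (hdiag (n + 1) (by lia))

section Weights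

variable {f : ℕ → ℝ} {p a : ℕ → ℕ → ℝ}

lemma weightBelow_succ {l : ℕ} (hl : 1 ≤ l) (n : ℕ) :
    weightBelow f n (l + 1) = weightBelow f n l + f (n - l) :=
  Finset.sum_Ico_succ_top hl _

lemma weightBelow_self (f : ℕ → ℝ) (n : ℕ) :
    weightBelow f n n = ∑ k ∈ Finset.Ico 1 n, f k := by
  simpa [weightBelow] using Finset.sum_Ico_reflect f 1 (Nat.le_succ n)

lemma weightBelow_pos (hpos : ∀ k, 1 ≤ k → 0 < f k) {n l : ℕ} (hl : 2 ≤ l) (hln : l ≤ n) :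
    0 < weightBelow f n l := by
  refine Finset.sum_pos (fun i hi => hpos _ ?_) (Finset.nonempty_Ico.mpr hl)
  have := (Finset.mem_Ico.mp hi).2
  lia

lemma weightBelow_succ_mul_le (hpos : ∀ k, 1 ≤ k → 0 < f k)
    (hconv : MonotoneOn (fun k => f (k + 1) / f k) (Set.Ici 1)) {n i l : ℕ} (hi : 1 ≤ i)
    (hil : i ≤ l) (hln : l ≤ n) :
    weightBelow f (n + 1) l * weightBelow f n i ≤ weightBelow f (n + 1) i * weightBelow f n l := by
  have hterm {r k : ℕ} (hri : r < i) (hik : i ≤ k) (hkl : k < l) :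
      f (n + 1 - k) * f (n - r) ≤ f (n + 1 - r) * f (n - k) := by
    rw [Nat.sub_add_comm (by lia), Nat.sub_add_comm (by lia),
      ← div_le_div_iff₀ (hpos _ (by lia)) (hpos _ (by lia))]
    exact hconv (Set.mem_Ici.mpr (by lia)) (Set.mem_Ici.mpr (by lia)) (by lia)
  have hsplit (N : ℕ) : weightBelow f N l = weightBelow f N i + ∑ k ∈ Finset.Ico i l, f (N - k) :=
    (Finset.sum_Ico_consecutive _ hi hil).symm
  rw [hsplit, hsplit, add_mul, mul_add, add_le_add_iff_left, mul_comm, weightBelow, weightBelow,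
    Finset.sum_mul_sum, Finset.sum_mul_sum]
  refine Finset.sum_le_sum fun r hr => Finset.sum_le_sum fun k hk => ?_
  obtain ⟨hik, hkl⟩ := Finset.mem_Ico.mp hk
  rw [mul_comm]
  exact hterm (Finset.mem_Ico.mp hr).2 hik hkl

namespace HasJumpWeights

lemma isDescentKernel (hp : HasJumpWeights p f) (hpos : ∀ k, 1 ≤ k → 0 < f k) :
    IsDescentKernel p where
  nonneg j i hi hij := by
    rw [hp j i hi hij]
    exact div_nonneg (hpos _ (by lia)).le
      (Finset.sum_nonneg fun k hk => (hpos k (Finset.mem_Ico.mp hk).1).le)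
  sum_eq_one j hj := by
    have hrow : ∑ i ∈ Finset.Ico 1 j, p j i = weightBelow f j j / ∑ k ∈ Finset.Ico 1 j, f k := by
      rw [weightBelow, Finset.sum_div]
      exact Finset.sum_congr rfl fun i hi =>
        hp j i (Finset.mem_Ico.mp hi).1 (Finset.mem_Ico.mp hi).2
    rw [hrow, ← weightBelow_self, div_self (weightBelow_pos hpos hj le_rfl).ne']

lemma monotoneOn (hp : HasJumpWeights p f) (hpos : ∀ k, 1 ≤ k → 0 < f k)
    (hanti : AntitoneOn f (Set.Ici 1)) (j : ℕ) : MonotoneOn (p j) (Set.Ico 1 j) := by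
  rintro i ⟨hi, hij⟩ l ⟨hl, hlj⟩ hil
  rw [hp j i hi hij, hp j l hl hlj]
  refine div_le_div_of_nonneg_right ?_
    (Finset.sum_nonneg fun k hk => (hpos k (Finset.mem_Ico.mp hk).1).le)
  exact hanti (Set.mem_Ici.mpr (by lia)) (Set.mem_Ici.mpr (by lia)) (by lia)

lemma sum_sub_mul_weightBelow (hp : HasJumpWeights p f) (hpos : ∀ k, 1 ≤ k → 0 < f k)
    (ha : IsOccupation p a) {n i : ℕ} (hi : 1 ≤ i) (hin : i < n) :
    ∑ l ∈ Finset.Ico i n, (a l i - a (l + 1) i) * weightBelow f n (l + 1)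
      = weightBelow f n i := by
  have hfirst_jump : a n i * weightBelow f n n
      = ∑ l ∈ Finset.Ico i n, a l i * (weightBelow f n (l + 1) - weightBelow f n l) := by
    rw [ha.eq_sum_first_jump hi hin, Finset.sum_mul]
    refine Finset.sum_congr rfl fun l hl => ?_
    obtain ⟨hil, hln⟩ := Finset.mem_Ico.mp hl
    have htotal : weightBelow f n n ≠ 0 := (weightBelow_pos hpos (by lia) le_rfl).ne'
    rw [hp n l (by lia) hln, ← weightBelow_self, weightBelow_succ (by lia), add_sub_cancel_left,
      mul_right_comm, div_mul_cancel₀ _ htotal, mul_comm]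
  rw [sum_Ico_sub_mul_succ (fun l => a l i) (weightBelow f n) hin.le, ha.self_eq_one i hi, one_mul,
    ← hfirst_jump, sub_add_cancel]

lemma occupation_succ_le (hp : HasJumpWeights p f) (hpos : ∀ k, 1 ≤ k → 0 < f k)
    (hconv : MonotoneOn (fun k => f (k + 1) / f k) (Set.Ici 1)) (ha : IsOccupation p a)
    {n i : ℕ} (hi : 1 ≤ i) (hin : i ≤ n) : a (n + 1) i ≤ a n i := by
  obtain rfl | hi_gt := hi.eq_or_lt
  · have hkernel := hp.isDescentKernel hpos
    rw [ha.apply_one hkernel hin, ha.apply_one hkernel (by lia)]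
  exact sub_nonneg.mp <| nonneg_of_sum_mul_eq (v := weightBelow f)
    (d := fun l => a l i - a (l + 1) i)
    (fun m him => weightBelow_pos hpos hi_gt him.le)
    (fun m him => weightBelow_pos hpos (by lia) le_rfl)
    (fun m l hil hlm => weightBelow_succ_mul_le hpos hconv hi hil hlm)
    (fun m him => hp.sum_sub_mul_weightBelow hpos ha hi him) hin

end HasJumpWeights

end Weights

theorem hd_occupation_limit_exists_general {f : ℕ → ℝ} (hpos : ∀ k, 1 ≤ k → 0 < f k)
    (hanti : AntitoneOn f (Set.Ici 1))
    (hconv : MonotoneOn (fun k => f (k + 1) / f k) (Set.Ici 1))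
    {p a : ℕ → ℕ → ℝ} (hp : HasJumpWeights p f) (ha : IsOccupation p a) :
    ∃ A : ℕ → ℝ,
      (∀ i, 1 ≤ i → Tendsto (fun n => a n i) atTop (𝓝 (A i))) ∧
      A 1 = 1 ∧
      ∀ i, 1 ≤ i → HasSum (fun j => if i < j then A j * p j i else 0) (A i) := by
  have hkernel := hp.isDescentKernel hpos
  choose! A hlim using fun i (hi : 1 ≤ i) =>
    ha.exists_tendsto_of_succ_le hkernel hi fun _ => hp.occupation_succ_le hpos hconv ha hi
  refine ⟨A, hlim, ?_, fun i =>
    ha.hasSum_of_tendsto hkernel (hp.monotoneOn hpos hanti) hlim⟩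
  refine tendsto_nhds_unique (hlim 1 le_rfl) (tendsto_const_nhds.congr' ?_)
  filter_upwards [eventually_ge_atTop 1] with n hn
  exact (ha.apply_one hkernel hn).symm

/-! ### The harmonic weights -/

lemma hdP_hasJumpWeights : HasJumpWeights hdP fun k => 1 / k := by
  intro j i _ hij
  have hj : ¬ IsMin j := not_isMin_of_lt hij
  simp only [hdP, harmonic', Nat.cast_sub hij.le, div_div,
    Finset.Icc_sub_one_right_eq_Ico_of_not_isMin hj]

lemma antitoneOn_one_div_natCast : AntitoneOn (fun k : ℕ => 1 / (k : ℝ)) (Set.Ici 1) :=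
  fun k hk l _ hkl => one_div_le_one_div_of_le (by exact_mod_cast hk) (by exact_mod_cast hkl)

lemma monotoneOn_ratio_one_div_natCast :
    MonotoneOn (fun k : ℕ => 1 / ((k + 1 : ℕ) : ℝ) / (1 / (k : ℝ))) (Set.Ici 1) := by
  intro k _ l _ hkl
  have hkl' : (k : ℝ) ≤ l := by exact_mod_cast hkl
  simp only [one_div, div_inv_eq_mul, inv_mul_eq_div, Nat.cast_add, Nat.cast_one]
  rw [div_le_div_iff₀ (by positivity) (by positivity)]
  linarith

theorem hd_occupation_limit_exists
    (a : ℕ → ℕ → ℝ)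
    (ha_diag : ∀ n : ℕ, 1 ≤ n → a n n = 1)
    (ha_rec : ∀ n i : ℕ, 1 ≤ i → i < n →
      a n i = ∑ j ∈ Finset.Ioc i n, a n j * hdP j i) :
    ∃ A : ℕ → ℝ,
      (∀ i : ℕ, 1 ≤ i → Filter.Tendsto (fun n => a n i) Filter.atTop (𝓝 (A i))) ∧
      A 1 = 1 ∧
      (∀ i : ℕ, 1 ≤ i →
        HasSum (fun j : ℕ => if i < j then A j * hdP j i else 0) (A i)) := by
  exact hd_occupation_limit_exists_general (f := fun k => 1 / k)
    (fun k hk => one_div_pos.mpr (by exact_mod_cast hk)) antitoneOn_one_div_natCast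
    monotoneOn_ratio_one_div_natCast hdP_hasJumpWeights ⟨ha_diag, ha_rec⟩
end

section
/- For every integer i ≥ 1, the limit a(i) := lim_{n→∞} a(n,i) (which exists) equals b(i); in particular a(1) = 1 and a(i) = 6·h_{i−1}/(π²·(i−1)) for i ≥ 2. -/
/-!
A function `f` that is harmonic for a strictly descending chain above level `i` satisfies
`∑ k < n, q n k * f k = const`, where `q n` is the law of the entrance into `{1, …, n - 1}` of the
chain "started at infinity": passing from `n` to `n + 1` replaces a visit to `n` by its first step.
If `f n` is a running maximum of `f` and `q n` is dominated by a multiple of the one-step law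
`p n`, then `∑ k < n, q n k * (f n - f k) ≤ 0` because `∑ k < n, p n k * (f n - f k) = 0`, so that
`f n` is at most the constant. In general `f` need not have late running maxima, but `f + ε * g`
does for every `g → ∞`. If the chain decreases `g` slowly enough, this costs only an error `O(ε)`,
and letting `ε → 0` for `f` and `-f` yields convergence to the constant. For `f n = a n i`,
extended by zero to `n < i`, the constant is `b i`.

For the harmonic descent chain, `b` is invariant thanks to `ζ(2) = π² / 6` and telescoping, while
`g n = h (n - 1)` works because `∑ k < n, (h n - h k) / (n - k)` is a partial sum of `ζ(2)`.
-/

open Real Filter Topology MeasureTheory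

section DescentChain

open Finset

variable {p a : ℕ → ℕ → ℝ} {b f g c : ℕ → ℝ} {C : ℝ} {i n k : ℕ}

/-- Transition probabilities `p n k` of a Markov chain on `{1, 2, …}` that jumps from every state
`n ≥ 2` to a smaller one. The values `p n k` with `k = 0` or `n ≤ k` are irrelevant. -/
structure IsDescentKernel_s4 (p : ℕ → ℕ → ℝ) : Prop where
  nonneg : ∀ n, ∀ k ∈ Ico 1 n, 0 ≤ p n k
  sum_eq_one : ∀ n, 2 ≤ n → ∑ k ∈ Ico 1 n, p n k = 1

/-- `a n i` is the probability that the chain with transition probabilities `p` visits `i` when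
started at `n`, for `1 ≤ i ≤ n`, as encoded by decomposing at the last state before `i`. -/
structure IsOccupation_s4 (p a : ℕ → ℕ → ℝ) : Prop where
  diag : ∀ n, 1 ≤ n → a n n = 1
  last_step : ∀ n i, 1 ≤ i → i < n → a n i = ∑ j ∈ Ioc i n, a n j * p j i

/-- `b` satisfies the balance equations `b k = ∑ j > k, b j * p j k` of the occupation
probabilities of a chain started at infinity, normalized at the absorbing state. -/
structure IsOccupationFromInfinity (p : ℕ → ℕ → ℝ) (b : ℕ → ℝ) : Prop where
  nonneg : ∀ n, 1 ≤ n → 0 ≤ b n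
  one : b 1 = 1
  balance : ∀ k, 1 ≤ k → HasSum (fun m ↦ b (k + 1 + m) * p (k + 1 + m) k) (b k)

/-- The function `f` is harmonic for the chain with transition probabilities `p` at every state
larger than `i`. -/
def HarmonicAbove (p : ℕ → ℕ → ℝ) (i : ℕ) (f : ℕ → ℝ) : Prop :=
  ∀ n, i < n → f n = ∑ k ∈ Ico 1 n, p n k * f k

/-- The probability that the chain started at infinity with occupation probabilities `b` enters
`{1, …, n - 1}` at the state `k`. -/
noncomputable def entranceLaw (p : ℕ → ℕ → ℝ) (b : ℕ → ℝ) (n k : ℕ) : ℝ :=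
  ∑' m, b (n + m) * p (n + m) k

/-- A Lyapunov function `g` for the entrance laws: these are dominated by multiples `c n` of the
one-step laws, and `c n` times the expected one-step decrease of `g` is bounded by `C`. -/
structure IsEntranceLyapunov (p : ℕ → ℕ → ℝ) (b g c : ℕ → ℝ) (C : ℝ) : Prop where
  mono : Monotone g
  tendsto : Tendsto g atTop atTop
  entranceLaw_le : ∀ n, ∀ k ∈ Ico 1 n, entranceLaw p b n k ≤ c n * p n k
  drift_le : ∀ n, 2 ≤ n → c n * ∑ k ∈ Ico 1 n, p n k * (g n - g k) ≤ C

namespace IsOccupationFromInfinity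

lemma entranceLaw_succ_self (hb : IsOccupationFromInfinity p b) (hk : 1 ≤ k) :
    entranceLaw p b (k + 1) k = b k :=
  (hb.balance k hk).tsum_eq

lemma summable (hb : IsOccupationFromInfinity p b) (hk : k ∈ Ico 1 n) :
    Summable fun m ↦ b (n + m) * p (n + m) k := by
  obtain ⟨hk₁, hkn⟩ := mem_Ico.1 hk
  obtain ⟨d, rfl⟩ := Nat.exists_eq_add_of_lt hkn
  simpa only [add_assoc, add_left_comm _ d, add_comm _ d] using
    (summable_nat_add_iff d).2 (hb.balance k hk₁).summable

lemma entranceLaw_eq_add (hb : IsOccupationFromInfinity p b) (hk : k ∈ Ico 1 n) :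
    entranceLaw p b n k = b n * p n k + entranceLaw p b (n + 1) k := by
  simp only [entranceLaw, (hb.summable hk).tsum_eq_zero_add, add_zero, add_assoc, add_comm 1]

lemma entranceLaw_nonneg (hb : IsOccupationFromInfinity p b) (hp : IsDescentKernel_s4 p)
    (hk : k ∈ Ico 1 n) : 0 ≤ entranceLaw p b n k := by
  refine tsum_nonneg fun m ↦ mul_nonneg (hb.nonneg _ ?_) (hp.nonneg _ _ ?_) <;> grind

end IsOccupationFromInfinity

namespace HarmonicAbove

lemma neg (hf : HarmonicAbove p i f) : HarmonicAbove p i (-f) := fun n hn ↦ by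
  simp [hf n hn]

lemma sum_mul_sub_eq_zero (hf : HarmonicAbove p i f) (hp : IsDescentKernel_s4 p) (hi : 1 ≤ i)
    (hn : i < n) : ∑ k ∈ Ico 1 n, p n k * (f n - f k) = 0 := by
  simp only [mul_sub, sum_sub_distrib]
  rw [← sum_mul, hp.sum_eq_one n (by lia), ← hf n hn, one_mul, sub_self]

lemma exists_abs_le (hf : HarmonicAbove p i f) (hp : IsDescentKernel_s4 p) (hi : 1 ≤ i) :
    ∃ K, ∀ n, 1 ≤ n → |f n| ≤ K := by
  refine ⟨∑ k ∈ Icc 1 i, |f k|, fun n ↦ ?_⟩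
  induction n using Nat.strong_induction_on with
  | _ n ih =>
    intro hn
    rcases le_or_gt n i with hni | hni
    · exact single_le_sum (f := fun k ↦ |f k|) (fun k _ ↦ abs_nonneg _) (mem_Icc.2 ⟨hn, hni⟩)
    · set K := ∑ k ∈ Icc 1 i, |f k|
      calc |f n| ≤ ∑ k ∈ Ico 1 n, |p n k * f k| := hf n hni ▸ abs_sum_le_sum_abs _ _
        _ ≤ ∑ k ∈ Ico 1 n, p n k * K := by
          refine sum_le_sum fun k hk ↦ ?_
          rw [abs_mul, abs_of_nonneg (hp.nonneg n k hk)]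
          exact mul_le_mul_of_nonneg_left (ih k (mem_Ico.1 hk).2 (mem_Ico.1 hk).1)
            (hp.nonneg n k hk)
        _ = K := by rw [← sum_mul, hp.sum_eq_one n (by lia), one_mul]

lemma sum_entranceLaw_mul (hf : HarmonicAbove p i f) (hb : IsOccupationFromInfinity p b)
    (hn : i < n) :
    ∑ k ∈ Ico 1 n, entranceLaw p b n k * f k =
      ∑ k ∈ Ico 1 (i + 1), entranceLaw p b (i + 1) k * f k := by
  induction n, hn using Nat.le_induction with
  | base => rfl
  | succ n hn ih =>
    have hn₁ : 1 ≤ n := Nat.one_le_of_lt hn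
    calc ∑ k ∈ Ico 1 (n + 1), entranceLaw p b (n + 1) k * f k
        = ∑ k ∈ Ico 1 n, entranceLaw p b (n + 1) k * f k +
            b n * ∑ k ∈ Ico 1 n, p n k * f k := by
          rw [sum_Ico_succ_top hn₁, hb.entranceLaw_succ_self hn₁, ← hf n hn]
      _ = ∑ k ∈ Ico 1 n, entranceLaw p b n k * f k := by
          rw [mul_sum, ← sum_add_distrib]
          refine sum_congr rfl fun k hk ↦ ?_
          rw [hb.entranceLaw_eq_add hk]
          ring
      _ = _ := ih

end HarmonicAbove

lemma IsDescentKernel_s4.sum_entranceLaw (hp : IsDescentKernel_s4 p)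
    (hb : IsOccupationFromInfinity p b) (hn : 2 ≤ n) :
    ∑ k ∈ Ico 1 n, entranceLaw p b n k = 1 := by
  have h_one : HarmonicAbove p 1 1 := fun n hn ↦ by simpa using (hp.sum_eq_one n hn).symm
  simpa [hb.entranceLaw_succ_self le_rfl, hb.one] using h_one.sum_entranceLaw_mul hb hn

namespace HarmonicAbove

lemma le_sum_entranceLaw_add_of_record (hf : HarmonicAbove p i f) (hp : IsDescentKernel_s4 p)
    (hb : IsOccupationFromInfinity p b) (hg : IsEntranceLyapunov p b g c C) (hi : 1 ≤ i)
    (hn : i < n) {ε : ℝ} (hε : 0 ≤ ε)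
    (hrecord : ∀ k ∈ Ico 1 n, f k + ε * g k ≤ f n + ε * g n) :
    f n ≤ ∑ k ∈ Ico 1 n, entranceLaw p b n k * f k + ε * C := by
  have hn₂ : 2 ≤ n := by lia
  have h_center : f n - ∑ k ∈ Ico 1 n, entranceLaw p b n k * f k =
      ∑ k ∈ Ico 1 n, entranceLaw p b n k * (f n - f k) := by
    simp only [mul_sub, sum_sub_distrib]
    rw [← sum_mul, hp.sum_entranceLaw hb hn₂, one_mul]
  rw [← sub_le_iff_le_add', h_center]
  calc ∑ k ∈ Ico 1 n, entranceLaw p b n k * (f n - f k)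
      ≤ ∑ k ∈ Ico 1 n, c n * p n k * (f n - f k + ε * (g n - g k)) := by
        refine sum_le_sum fun k hk ↦ ?_
        have h_g : 0 ≤ ε * (g n - g k) :=
          mul_nonneg hε (sub_nonneg.2 (hg.mono (mem_Ico.1 hk).2.le))
        have h_fg : 0 ≤ f n - f k + ε * (g n - g k) := by linarith [hrecord k hk]
        exact (mul_le_mul_of_nonneg_left (le_add_of_nonneg_right h_g)
          (hb.entranceLaw_nonneg hp hk)).trans
          (mul_le_mul_of_nonneg_right (hg.entranceLaw_le n k hk) h_fg)
    _ = c n * ∑ k ∈ Ico 1 n, p n k * (f n - f k) +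
          ε * (c n * ∑ k ∈ Ico 1 n, p n k * (g n - g k)) := by
        simp only [mul_sum, ← sum_add_distrib]
        exact sum_congr rfl fun k _ ↦ by ring
    _ ≤ ε * C := by
        rw [hf.sum_mul_sub_eq_zero hp hi hn, mul_zero, zero_add]
        exact mul_le_mul_of_nonneg_left (hg.drift_le n hn₂) hε

lemma eventually_le_add (hf : HarmonicAbove p i f) (hp : IsDescentKernel_s4 p)
    (hb : IsOccupationFromInfinity p b) (hg : IsEntranceLyapunov p b g c C) (hi : 1 ≤ i)
    {ε : ℝ} (hε : 0 < ε) :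
    ∀ᶠ n in atTop,
      f n ≤ ∑ k ∈ Ico 1 (i + 1), entranceLaw p b (i + 1) k * f k + ε * C := by
  obtain ⟨K, hK⟩ := hf.exists_abs_le hp hi
  filter_upwards [(hg.tendsto.const_mul_atTop hε).eventually_gt_atTop (2 * K + ε * g i),
    eventually_ge_atTop 1] with n hgn hn
  obtain ⟨r, hr, hmax⟩ := exists_max_image (Icc 1 n) (fun k ↦ f k + ε * g k)
    ⟨n, mem_Icc.2 ⟨hn, le_rfl⟩⟩
  obtain ⟨hr₁, hrn⟩ := mem_Icc.1 hr
  have hn_le : f n + ε * g n ≤ f r + ε * g r := hmax n (mem_Icc.2 ⟨hn, le_rfl⟩)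
  have hir : i < r := by
    by_contra! hri
    have hgri : ε * g r ≤ ε * g i := mul_le_mul_of_nonneg_left (hg.mono hri) hε.le
    linarith [neg_le_of_abs_le (hK n hn), le_of_abs_le (hK r hr₁)]
  have hfr := hf.le_sum_entranceLaw_add_of_record hp hb hg hi hir hε.le fun k hk ↦
    hmax k (mem_Icc.2 ⟨(mem_Ico.1 hk).1, (mem_Ico.1 hk).2.le.trans hrn⟩)
  rw [hf.sum_entranceLaw_mul hb hir] at hfr
  have hgrn : ε * g r ≤ ε * g n := mul_le_mul_of_nonneg_left (hg.mono hrn) hε.le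
  linarith

theorem tendsto (hf : HarmonicAbove p i f) (hp : IsDescentKernel_s4 p)
    (hb : IsOccupationFromInfinity p b) (hg : IsEntranceLyapunov p b g c C) (hi : 1 ≤ i) :
    Tendsto f atTop (𝓝 (∑ k ∈ Ico 1 (i + 1), entranceLaw p b (i + 1) k * f k)) := by
  rw [Metric.tendsto_nhds]
  intro δ hδ
  obtain ⟨ε, hε, hεC⟩ : ∃ ε > 0, ε * C < δ :=
    ⟨δ / (|C| + 1), by positivity, by
      rw [div_mul_eq_mul_div, div_lt_iff₀ (by positivity)]
      nlinarith [le_abs_self C]⟩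
  filter_upwards [hf.eventually_le_add hp hb hg hi hε, hf.neg.eventually_le_add hp hb hg hi hε]
    with n h_upper h_lower
  simp only [Pi.neg_apply, mul_neg, sum_neg_distrib] at h_lower
  rw [Real.dist_eq, abs_lt]
  constructor <;> linarith

end HarmonicAbove

namespace IsOccupation_s4

lemma first_step (ha : IsOccupation_s4 p a) (hi : 1 ≤ i) (hin : i < n) :
    a n i = ∑ k ∈ Ico i n, p n k * a k i := by
  induction hd : n - i using Nat.strong_induction_on generalizing i with
  | _ d ih =>
    have h_inner : ∑ j ∈ Ioo i n, a n j * p j i = ∑ k ∈ Ioo i n, p n k * a k i :=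
      calc ∑ j ∈ Ioo i n, a n j * p j i
          = ∑ j ∈ Ioo i n, ∑ k ∈ Ico j n, p n k * a k j * p j i := by
            refine sum_congr rfl fun j hj ↦ ?_
            obtain ⟨hij, hjn⟩ := mem_Ioo.1 hj
            rw [ih (n - j) (by lia) (by lia) hjn rfl, sum_mul]
        _ = ∑ k ∈ Ioo i n, ∑ j ∈ Ioc i k, p n k * a k j * p j i :=
            sum_comm' fun j k ↦ by simp only [mem_Ioo, mem_Ico, mem_Ioc]; lia
        _ = ∑ k ∈ Ioo i n, p n k * a k i := by
            refine sum_congr rfl fun k hk ↦ ?_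
            rw [ha.last_step k i hi (mem_Ioo.1 hk).1, mul_sum]
            exact sum_congr rfl fun j _ ↦ mul_assoc _ _ _
    rw [ha.last_step n i hi hin, ← Ioo_insert_right hin, ← Ioo_insert_left hin,
      sum_insert right_notMem_Ioo, sum_insert left_notMem_Ioo, h_inner, ha.diag n (by lia),
      ha.diag i hi, one_mul, mul_one]

lemma harmonicAbove_indicator (ha : IsOccupation_s4 p a) (hi : 1 ≤ i) :
    HarmonicAbove p i ((Set.Ici i).indicator fun n ↦ a n i) := fun n hn ↦ by
  rw [Set.indicator_of_mem (Set.mem_Ici.2 hn.le), ha.first_step hi hn]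
  refine sum_subset_zero_on_sdiff (Ico_subset_Ico_left hi) (fun k hk ↦ ?_) fun k hk ↦ ?_
  · rw [Set.indicator_of_notMem (by grind), mul_zero]
  · rw [Set.indicator_of_mem (Set.mem_Ici.2 (mem_Ico.1 hk).1)]

theorem tendsto (ha : IsOccupation_s4 p a) (hp : IsDescentKernel_s4 p)
    (hb : IsOccupationFromInfinity p b) (hg : IsEntranceLyapunov p b g c C) (hi : 1 ≤ i) :
    Tendsto (fun n ↦ a n i) atTop (𝓝 (b i)) := by
  set f := (Set.Ici i).indicator fun n ↦ a n i with hf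
  have h_limit : ∑ k ∈ Ico 1 (i + 1), entranceLaw p b (i + 1) k * f k = b i := by
    rw [sum_Ico_succ_top hi, sum_eq_zero, zero_add, hf, Set.indicator_of_mem Set.self_mem_Ici,
      ha.diag i hi, mul_one, hb.entranceLaw_succ_self hi]
    intro k hk
    rw [hf, Set.indicator_of_notMem (by simpa using (mem_Ico.1 hk).2), mul_zero]
  refine (h_limit ▸ (ha.harmonicAbove_indicator hi).tendsto hp hb hg hi).congr' ?_
  filter_upwards [eventually_ge_atTop i] with n hn using Set.indicator_of_mem hn _

end IsOccupation_s4

end DescentChain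

section Telescoping

variable {u : ℕ → ℝ}

lemma hasSum_sub_succ_of_antitone (hu : Antitone u) {l : ℝ} (hl : Tendsto u atTop (𝓝 l)) :
    HasSum (fun m ↦ u m - u (m + 1)) (u 0 - l) := by
  rw [hasSum_iff_tendsto_nat_of_nonneg fun m ↦ sub_nonneg.2 (hu m.le_succ)]
  simpa only [Finset.sum_range_sub'] using hl.const_sub (u 0)

lemma hasSum_sub_add_of_antitone (hu : Antitone u) (hl : Tendsto u atTop (𝓝 0)) (s : ℕ) :
    HasSum (fun m ↦ u m - u (m + s)) (∑ j ∈ Finset.range s, u j) := by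
  induction s with
  | zero => simp
  | succ s ih =>
    have h_step : HasSum (fun m ↦ u (m + s) - u (m + 1 + s)) (u s) := by
      simpa using hasSum_sub_succ_of_antitone (hu.comp_monotone (add_left_mono (a := s)))
        ((tendsto_add_atTop_iff_nat s).2 hl)
    simpa only [Finset.sum_range_succ, sub_add_sub_cancel, add_right_comm _ 1 s,
      ← add_assoc]
      using ih.add h_step

lemma antitone_one_div_add {d : ℝ} (hd : 0 < d) : Antitone fun m : ℕ ↦ 1 / (d + m) :=
  fun m n hmn ↦ by dsimp only; gcongr

lemma tendsto_one_div_add (d : ℝ) : Tendsto (fun m : ℕ ↦ 1 / (d + m)) atTop (𝓝 0) :=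
  tendsto_const_nhds.div_atTop (tendsto_atTop_add_const_left _ d tendsto_natCast_atTop_atTop)

lemma hasSum_one_div_add_mul_succ {d : ℝ} (hd : 0 < d) :
    HasSum (fun m : ℕ ↦ 1 / ((d + m) * (d + m + 1))) (1 / d) := by
  have h_tele := hasSum_sub_succ_of_antitone (antitone_one_div_add hd) (tendsto_one_div_add d)
  rw [Nat.cast_zero, add_zero, sub_zero] at h_tele
  refine h_tele.congr_fun fun m ↦ ?_
  push_cast
  field_simp
  ring

end Telescoping

section HarmonicNumbers

open Finset

lemma harmonic'_eq_sum_range (n : ℕ) : harmonic' n = ∑ k ∈ range n, 1 / ((k : ℝ) + 1) := by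
  rw [harmonic', ← Ico_add_one_right_eq_Icc, sum_Ico_eq_sum_range]
  simp [add_comm]

lemma harmonic'_succ (n : ℕ) : harmonic' (n + 1) = harmonic' n + 1 / ((n : ℝ) + 1) := by
  simp only [harmonic'_eq_sum_range, sum_range_succ]

lemma harmonic'_nonneg (n : ℕ) : 0 ≤ harmonic' n :=
  sum_nonneg fun _ _ ↦ by positivity

lemma harmonic'_pos {n : ℕ} (hn : 1 ≤ n) : 0 < harmonic' n := by
  obtain ⟨m, rfl⟩ := Nat.exists_eq_add_of_le' hn
  rw [harmonic'_succ]
  exact add_pos_of_nonneg_of_pos (harmonic'_nonneg m) (by positivity)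

lemma monotone_harmonic' : Monotone harmonic' := monotone_nat_of_le_succ fun n ↦ by
  rw [harmonic'_succ]
  exact le_add_of_nonneg_right (by positivity)

lemma tendsto_harmonic' : Tendsto harmonic' atTop atTop := by
  simpa only [← harmonic'_eq_sum_range] using tendsto_sum_range_one_div_nat_succ_atTop

lemma sum_one_div_sub_eq_harmonic' (n : ℕ) :
    ∑ k ∈ range n, 1 / ((n : ℝ) - k) = harmonic' n := by
  rw [harmonic'_eq_sum_range, ← sum_range_reflect]
  refine sum_congr rfl fun k hk ↦ ?_
  rw [mem_range] at hk
  congr 1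
  grind [Nat.cast_sub]

lemma sum_harmonic'_sub_div (n : ℕ) :
    ∑ k ∈ range n, (harmonic' n - harmonic' k) / ((n : ℝ) - k) =
      ∑ k ∈ range n, 1 / ((k : ℝ) + 1) ^ 2 := by
  induction n with
  | zero => simp
  | succ n ih =>
    have h_term : ∀ k ∈ range n,
        (harmonic' (n + 1) - harmonic' (k + 1)) / (((n + 1 : ℕ) : ℝ) - (k + 1 : ℕ)) =
          (harmonic' n - harmonic' k) / ((n : ℝ) - k) - 1 / ((k : ℝ) + 1) / (n + 1) := by
      intro k hk
      have hkn : (n : ℝ) - k ≠ 0 := sub_ne_zero.2 (Nat.cast_injective.ne (mem_range.1 hk).ne')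
      rw [harmonic'_succ, harmonic'_succ]
      push_cast
      rw [add_sub_add_right_eq_sub]
      field_simp
      ring
    rw [sum_range_succ', sum_congr rfl h_term, sum_sub_distrib, ih, ← sum_div,
      ← harmonic'_eq_sum_range, sum_range_succ, harmonic'_succ]
    have h_zero : harmonic' 0 = 0 := by simp [harmonic']
    rw [h_zero]
    push_cast
    field_simp
    ring

lemma hasSum_one_div_mul_add {s : ℕ} (hs : s ≠ 0) :
    HasSum (fun m : ℕ ↦ 1 / (((m : ℝ) + 1) * (m + 1 + s))) (harmonic' s / s) := by
  have hs' : (s : ℝ) ≠ 0 := Nat.cast_ne_zero.2 hs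
  have h_tele := hasSum_sub_add_of_antitone (antitone_one_div_add one_pos)
    (tendsto_one_div_add 1) s
  simp only [add_comm (1 : ℝ), ← harmonic'_eq_sum_range] at h_tele
  refine (h_tele.div_const (s : ℝ)).congr_fun fun m ↦ ?_
  push_cast
  field_simp
  ring

lemma hasSum_one_div_succ_sq : HasSum (fun m : ℕ ↦ 1 / ((m : ℝ) + 1) ^ 2) (π ^ 2 / 6) := by
  simpa using (hasSum_nat_add_iff' 1).2 hasSum_zeta_two

lemma sum_harmonic'_sub_div_le (n : ℕ) :
    ∑ k ∈ range n, (harmonic' n - harmonic' k) / ((n : ℝ) - k) ≤ π ^ 2 / 6 :=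
  sum_harmonic'_sub_div n ▸ sum_le_hasSum _ (fun _ _ ↦ by positivity) hasSum_one_div_succ_sq

end HarmonicNumbers

section HarmonicDescent

open Finset

lemma isDescentKernel_hdP : IsDescentKernel_s4 hdP where
  nonneg n k hk := by
    have hkn : (k : ℝ) ≤ n := Nat.cast_le.2 (mem_Ico.1 hk).2.le
    exact one_div_nonneg.2 (mul_nonneg (sub_nonneg.2 hkn) (harmonic'_nonneg _))
  sum_eq_one n hn := by
    obtain ⟨n, rfl⟩ := Nat.exists_eq_add_of_le' (Nat.one_le_of_lt hn)
    have h_pos : 0 < harmonic' n := harmonic'_pos (by lia)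
    rw [sum_Ico_eq_sum_range]
    simp only [hdP, ← div_div, ← sum_div, Nat.add_sub_cancel, Nat.cast_add,
      Nat.cast_one, add_comm (1 : ℝ), add_sub_add_right_eq_sub, sum_one_div_sub_eq_harmonic']
    exact div_self h_pos.ne'

lemma hdB_nonneg {n : ℕ} (hn : 1 ≤ n) : 0 ≤ hdB n := by
  have hn' : (0 : ℝ) ≤ n - 1 := sub_nonneg.2 (Nat.one_le_cast.2 hn)
  have := harmonic'_nonneg (n - 1)
  unfold hdB
  split_ifs <;> positivity

lemma hdB_mul_hdP {n k : ℕ} (hn : 2 ≤ n) :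
    hdB n * hdP n k = 6 / π ^ 2 * (1 / (((n : ℝ) - 1) * (n - k))) := by
  have h_pos : 0 < harmonic' (n - 1) := harmonic'_pos (by lia)
  rw [hdB, if_neg (by lia), hdP]
  field_simp

lemma hasSum_hdB_mul_hdP {k : ℕ} (hk : 1 ≤ k) :
    HasSum (fun m ↦ hdB (k + 1 + m) * hdP (k + 1 + m) k) (hdB k) := by
  have h_term (m : ℕ) : hdB (k + 1 + m) * hdP (k + 1 + m) k =
      6 / π ^ 2 * (1 / (((k : ℝ) + m) * (m + 1))) := by
    rw [hdB_mul_hdP (by lia)]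
    push_cast
    ring_nf
  rcases hk.eq_or_lt with rfl | hk₁
  · have h_one : hdB 1 = 6 / π ^ 2 * (π ^ 2 / 6) := by
      rw [hdB, if_pos rfl]
      field_simp
    rw [h_one]
    refine (hasSum_one_div_succ_sq.mul_left (6 / π ^ 2)).congr_fun fun m ↦ ?_
    rw [h_term]
    push_cast
    ring
  · obtain ⟨s, rfl⟩ := Nat.exists_eq_add_of_le' hk
    have h_succ : hdB (s + 1) = 6 / π ^ 2 * (harmonic' s / s) := by
      rw [hdB, if_neg hk₁.ne', Nat.add_sub_cancel, Nat.cast_succ, add_sub_cancel_right,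
        mul_div_mul_comm]
    rw [h_succ]
    refine ((hasSum_one_div_mul_add (by lia)).mul_left (6 / π ^ 2)).congr_fun fun m ↦ ?_
    rw [h_term]
    push_cast
    ring

lemma isOccupationFromInfinity_hdB : IsOccupationFromInfinity hdP hdB where
  nonneg _ := hdB_nonneg
  one := if_pos rfl
  balance _ := hasSum_hdB_mul_hdP

lemma entranceLaw_hd_le {n k : ℕ} (hk : k ∈ Ico 1 n) :
    entranceLaw hdP hdB n k ≤ 12 / π ^ 2 * harmonic' (n - 1) * hdP n k := by
  obtain ⟨hk₁, hkn⟩ := mem_Ico.1 hk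
  have h_pos : 0 < harmonic' (n - 1) := harmonic'_pos (by lia)
  have hk₁' : (1 : ℝ) ≤ k := Nat.one_le_cast.2 hk₁
  obtain ⟨d, hd, hnk⟩ : ∃ d : ℝ, 1 ≤ d ∧ (n : ℝ) - k = d :=
    ⟨_, le_sub_iff_add_le'.2 (by exact_mod_cast hkn), rfl⟩
  have h_term (m : ℕ) : hdB (n + m) * hdP (n + m) k ≤
      12 / π ^ 2 * (1 / ((d + m) * (d + m + 1))) := by
    have hdm : 1 ≤ d + m := le_add_of_le_of_nonneg hd m.cast_nonneg
    calc hdB (n + m) * hdP (n + m) k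
        = 6 / π ^ 2 * (1 / (((n : ℝ) + m - 1) * (d + m))) := by
          rw [hdB_mul_hdP (by lia), ← hnk]
          push_cast
          ring
      _ ≤ 6 / π ^ 2 * (1 / ((d + m + 1) / 2 * (d + m))) := by
          gcongr
          linarith [hdm]
      _ = 12 / π ^ 2 * (1 / ((d + m) * (d + m + 1))) := by
          field_simp
          ring
  calc entranceLaw hdP hdB n k
      ≤ 12 / π ^ 2 * (1 / d) :=
        hasSum_le h_term (isOccupationFromInfinity_hdB.summable hk).hasSum
          ((hasSum_one_div_add_mul_succ (zero_lt_one.trans_le hd)).mul_left _)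
    _ = 12 / π ^ 2 * harmonic' (n - 1) * hdP n k := by
        rw [hdP, hnk]
        field_simp

lemma hd_drift_le {n : ℕ} (hn : 2 ≤ n) :
    12 / π ^ 2 * harmonic' (n - 1) *
      ∑ k ∈ Ico 1 n, hdP n k * (harmonic' (n - 1) - harmonic' (k - 1)) ≤ 2 := by
  obtain ⟨n, rfl⟩ := Nat.exists_eq_add_of_le' (Nat.one_le_of_lt hn)
  have h_pos : 0 < harmonic' n := harmonic'_pos (by lia)
  have h_sum : harmonic' n * ∑ k ∈ Ico 1 (n + 1), hdP (n + 1) k *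
      (harmonic' n - harmonic' (k - 1)) =
      ∑ k ∈ range n, (harmonic' n - harmonic' k) / ((n : ℝ) - k) := by
    rw [sum_Ico_eq_sum_range, mul_sum]
    refine sum_congr rfl fun k _ ↦ ?_
    rw [hdP, Nat.add_sub_cancel, Nat.add_sub_cancel_left, Nat.cast_add, Nat.cast_add,
      add_comm (n : ℝ), add_sub_add_left_eq_sub]
    field_simp
  rw [Nat.add_sub_cancel, mul_assoc, h_sum]
  calc 12 / π ^ 2 * ∑ k ∈ range n, (harmonic' n - harmonic' k) / ((n : ℝ) - k)
      ≤ 12 / π ^ 2 * (π ^ 2 / 6) := by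
        gcongr
        exact sum_harmonic'_sub_div_le n
    _ = 2 := by
        field_simp
        norm_num

lemma isEntranceLyapunov_harmonic' :
    IsEntranceLyapunov hdP hdB (fun n ↦ harmonic' (n - 1))
      (fun n ↦ 12 / π ^ 2 * harmonic' (n - 1)) 2 where
  mono _ _ h := monotone_harmonic' (Nat.sub_le_sub_right h 1)
  tendsto := tendsto_harmonic'.comp (tendsto_sub_atTop_nat 1)
  entranceLaw_le _ _ := entranceLaw_hd_le
  drift_le _ := hd_drift_le

end HarmonicDescent

theorem hd_occupation_limit_eq_b
    (a : ℕ → ℕ → ℝ)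
    (ha_diag : ∀ n : ℕ, 1 ≤ n → a n n = 1)
    (ha_rec : ∀ n i : ℕ, 1 ≤ i → i < n →
      a n i = ∑ j ∈ Finset.Ioc i n, a n j * hdP j i)
    (i : ℕ) (hi : 1 ≤ i) :
    Filter.Tendsto (fun n => a n i) Filter.atTop (𝓝 (hdB i)) := by
  have ha : IsOccupation_s4 hdP a := ⟨ha_diag, ha_rec⟩
  exact ha.tendsto isDescentKernel_hdP isOccupationFromInfinity_hdB
    isEntranceLyapunov_harmonic' hi
end
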